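/- Let T be a CNAT which has an internal dot whose two children are a leaf and an internal dot. Then T has at least two interacting leaves, i.e. there exist two distinct leaves of T which are interacting. -/

import Mathlib

/-!
Formalization of complete non-ambiguous trees (CNATs).

A CNAT of size `n` is modelled as a Boolean filling `D : Fin n → Fin n → Bool`
of the `n × n` grid (`D i j = true` meaning that cell in row `i`, column `j`
is dotted; rows are numbered from the top, columns from the left, `0`-based),
satisfying the root, non-ambiguity, minimality and completeness conditions.
-/

namespace CNATf

/-- A filling of the `n × n` grid. -/
abbrev Grid (n : ℕ) := Fin n → Fin n → Bool

/-- Cell `(i, j)` is dotted. -/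
def Dotted {n : ℕ} (D : Grid n) (i j : Fin n) : Prop := D i j = true

/-- There is a dotted cell above `(i, j)` in the same column. -/
def HasDotAbove {n : ℕ} (D : Grid n) (i j : Fin n) : Prop :=
  ∃ i' : Fin n, i' < i ∧ Dotted D i' j

/-- There is a dotted cell to the left of `(i, j)` in the same row. -/
def HasDotLeft {n : ℕ} (D : Grid n) (i j : Fin n) : Prop :=
  ∃ j' : Fin n, j' < j ∧ Dotted D i j'

/-- There is a dotted cell below `(i, j)` in the same column. -/
def HasDotBelow {n : ℕ} (D : Grid n) (i j : Fin n) : Prop :=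
  ∃ i' : Fin n, i < i' ∧ Dotted D i' j

/-- There is a dotted cell to the right of `(i, j)` in the same row. -/
def HasDotRight {n : ℕ} (D : Grid n) (i j : Fin n) : Prop :=
  ∃ j' : Fin n, j < j' ∧ Dotted D i j'

/-- `D` is a complete non-ambiguous tree (CNAT) on the `n × n` grid:
root, non-ambiguity, minimality (rows and columns), completeness. -/
def IsCNAT {n : ℕ} (D : Grid n) : Prop :=
  (∀ i j : Fin n, (i : ℕ) = 0 → (j : ℕ) = 0 → Dotted D i j) ∧
  (∀ i j : Fin n, Dotted D i j → ¬((i : ℕ) = 0 ∧ (j : ℕ) = 0) →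
      Xor' (HasDotAbove D i j) (HasDotLeft D i j)) ∧
  (∀ i : Fin n, ∃ j : Fin n, Dotted D i j) ∧
  (∀ j : Fin n, ∃ i : Fin n, Dotted D i j) ∧
  (∀ i j : Fin n, Dotted D i j →
      (HasDotBelow D i j ∧ HasDotRight D i j) ∨ (¬HasDotBelow D i j ∧ ¬HasDotRight D i j))

/-- A leaf: a dotted cell with no dot below it in its column and no dot
to its right in its row. -/
def IsLeaf {n : ℕ} (D : Grid n) (i j : Fin n) : Prop :=
  Dotted D i j ∧ ¬HasDotBelow D i j ∧ ¬HasDotRight D i j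

/-- An internal dot: a dotted cell with both a dot below it in its column and
a dot to its right in its row. -/
def IsInternal {n : ℕ} (D : Grid n) (i j : Fin n) : Prop :=
  Dotted D i j ∧ HasDotBelow D i j ∧ HasDotRight D i j

/-- `p` is the nearest dotted cell above `l` in the column of `l`. -/
def ParentAbove {n : ℕ} (D : Grid n) (p l : Fin n × Fin n) : Prop :=
  p.2 = l.2 ∧ p.1 < l.1 ∧ Dotted D p.1 p.2 ∧
    ∀ k : Fin n, p.1 < k → k < l.1 → ¬Dotted D k l.2

/-- `p` is the nearest dotted cell to the left of `l` in the row of `l`,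
and there is no dotted cell above `l` in its column. -/
def ParentLeft {n : ℕ} (D : Grid n) (p l : Fin n × Fin n) : Prop :=
  p.1 = l.1 ∧ p.2 < l.2 ∧ Dotted D p.1 p.2 ∧
    (∀ k : Fin n, p.2 < k → k < l.2 → ¬Dotted D l.1 k) ∧
    ¬HasDotAbove D l.1 l.2

/-- `p` is the parent of the dot `l`: the nearest dotted cell above `l` in its
column if such a cell exists, otherwise the nearest dotted cell to its left. -/
def IsParent {n : ℕ} (D : Grid n) (p l : Fin n × Fin n) : Prop :=
  ParentAbove D p l ∨ ParentLeft D p l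

/-- `c` is the left child of the internal dot `p`: the nearest dot below `p`
in the column of `p`. -/
def IsLeftChild {n : ℕ} (D : Grid n) (p c : Fin n × Fin n) : Prop :=
  c.2 = p.2 ∧ p.1 < c.1 ∧ Dotted D c.1 c.2 ∧
    ∀ k : Fin n, p.1 < k → k < c.1 → ¬Dotted D k p.2

/-- `c` is the right child of the internal dot `p`: the nearest dot to the
right of `p` in the row of `p`. -/
def IsRightChild {n : ℕ} (D : Grid n) (p c : Fin n × Fin n) : Prop :=
  c.1 = p.1 ∧ p.2 < c.2 ∧ Dotted D c.1 c.2 ∧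
    ∀ k : Fin n, p.2 < k → k < c.2 → ¬Dotted D p.1 k

/-- A left leaf: a leaf whose parent is above it in its column. -/
def IsLeftLeaf {n : ℕ} (D : Grid n) (l : Fin n × Fin n) : Prop :=
  IsLeaf D l.1 l.2 ∧ ∃ p : Fin n × Fin n, ParentAbove D p l

/-- A right leaf: a leaf whose parent is to its left in its row. -/
def IsRightLeaf {n : ℕ} (D : Grid n) (l : Fin n × Fin n) : Prop :=
  IsLeaf D l.1 l.2 ∧ ∃ p : Fin n × Fin n, ParentLeft D p l

/-- A short leaf: a leaf whose parent lies in a cell adjacent to it. -/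
def IsShortLeaf {n : ℕ} (D : Grid n) (l : Fin n × Fin n) : Prop :=
  IsLeaf D l.1 l.2 ∧ ∃ p : Fin n × Fin n, IsParent D p l ∧
    (((p.1 : ℕ) + 1 = (l.1 : ℕ) ∧ p.2 = l.2) ∨ ((p.2 : ℕ) + 1 = (l.2 : ℕ) ∧ p.1 = l.1))

/-- A long leaf: a leaf which is not short. -/
def IsLongLeaf {n : ℕ} (D : Grid n) (l : Fin n × Fin n) : Prop :=
  IsLeaf D l.1 l.2 ∧ ¬IsShortLeaf D l

/-- All leaves of `D` are short (i.e. `D ∈ 𝒜ₙ`). -/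
def AllLeavesShort {n : ℕ} (D : Grid n) : Prop :=
  ∀ l : Fin n × Fin n, IsLeaf D l.1 l.2 → IsShortLeaf D l

/-- `π` is the permutation associated with the CNAT `D`: for every row `i`,
the leaf of row `i` lies in column `π i`. -/
def IsAssocPerm {n : ℕ} (D : Grid n) (π : Equiv.Perm (Fin n)) : Prop :=
  ∀ i : Fin n, IsLeaf D i (π i)

/-- Two left leaves `l₁`, `l₂` (with respective parents `p₁`, `p₂`) are
interacting if `r(p₁) < r(l₂) < r(l₁)` or `r(p₂) < r(l₁) < r(l₂)`. -/
def InteractingLeft {n : ℕ} (D : Grid n) (l₁ l₂ : Fin n × Fin n) : Prop :=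
  IsLeftLeaf D l₁ ∧ IsLeftLeaf D l₂ ∧
    ∃ p₁ p₂ : Fin n × Fin n, ParentAbove D p₁ l₁ ∧ ParentAbove D p₂ l₂ ∧
      ((p₁.1 < l₂.1 ∧ l₂.1 < l₁.1) ∨ (p₂.1 < l₁.1 ∧ l₁.1 < l₂.1))

/-- Two right leaves `l₁`, `l₂` (with respective parents `p₁`, `p₂`) are
interacting if `c(p₁) < c(l₂) < c(l₁)` or `c(p₂) < c(l₁) < c(l₂)`. -/
def InteractingRight {n : ℕ} (D : Grid n) (l₁ l₂ : Fin n × Fin n) : Prop :=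
  IsRightLeaf D l₁ ∧ IsRightLeaf D l₂ ∧
    ∃ p₁ p₂ : Fin n × Fin n, ParentLeft D p₁ l₁ ∧ ParentLeft D p₂ l₂ ∧
      ((p₁.2 < l₂.2 ∧ l₂.2 < l₁.2) ∨ (p₂.2 < l₁.2 ∧ l₁.2 < l₂.2))

/-- Two leaves are interacting (as left leaves or as right leaves). -/
def Interacting {n : ℕ} (D : Grid n) (l₁ l₂ : Fin n × Fin n) : Prop :=
  InteractingLeft D l₁ l₂ ∨ InteractingRight D l₁ l₂

/-- The switch `S(T, l₁, l₂)` of two interacting leaves: `l₁` and `l₂` are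
erased and replaced by dots at `(r(l₂), c(l₁))` and `(r(l₁), c(l₂))`
(for left leaves this exchanges their row labels, for right leaves this
exchanges their column labels; both descriptions yield the same filling). -/
def switchLeaves {n : ℕ} (D : Grid n) (l₁ l₂ : Fin n × Fin n) : Grid n := fun i j =>
  if (i = l₂.1 ∧ j = l₁.2) ∨ (i = l₁.1 ∧ j = l₂.2) then true
  else if (i = l₁.1 ∧ j = l₁.2) ∨ (i = l₂.1 ∧ j = l₂.2) then false
  else D i j

/-!
Suppose the left child of `d` is a leaf and its right child is internal. The last internal dot `e`
in the row of `d` has a leaf as its right child. If the left child of `e` is also a leaf, then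
this leaf and the left child of `d` are left leaves whose parents lie in the same row, so they
interact. Otherwise `e` again has a leaf and an internal dot as its children, and it lies further
right than `d`. When instead the right child of `d` is the leaf, the transposed argument moves
down along the column of `d`. As the grid is finite, the process ends at a pair of interacting
leaves.
-/

variable {n : ℕ} {D : Grid n} {i j k : Fin n} {d c c₁ c₂ l₁ l₂ p l p₁ p₂ : Fin n × Fin n}

/-- Completeness of a filling: no dot has exactly one of a dot below it and a dot to its right. -/
def IsComplete (D : Grid n) : Prop :=
  ∀ ⦃i j⦄, Dotted D i j → (HasDotBelow D i j ↔ HasDotRight D i j)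

/-- The exclusive half of non-ambiguity. Dots with neither a dot above nor a dot to the left are
allowed anywhere, so that a filling may be a forest with several roots. -/
def IsNonAmbiguous (D : Grid n) : Prop :=
  ∀ ⦃i j⦄, Dotted D i j → ¬(HasDotAbove D i j ∧ HasDotLeft D i j)

/-- An internal dot, one of whose two children is a leaf and the other one internal. -/
def HasMixedChildren (D : Grid n) (d : Fin n × Fin n) : Prop :=
  ∃ c₁ c₂, IsInternal D d.1 d.2 ∧ IsLeftChild D d c₁ ∧ IsRightChild D d c₂ ∧
    ((IsLeaf D c₁.1 c₁.2 ∧ IsInternal D c₂.1 c₂.2) ∨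
      (IsInternal D c₁.1 c₁.2 ∧ IsLeaf D c₂.1 c₂.2))

theorem IsCNAT.isComplete (hD : IsCNAT D) : IsComplete D := fun i j hij ↦
  iff_iff_and_or_not_and_not.mpr (hD.2.2.2.2 i j hij)

theorem IsCNAT.isNonAmbiguous (hD : IsCNAT D) : IsNonAmbiguous D := by
  rintro i j hij ⟨⟨i', hi', h_above⟩, h_left⟩
  have not_root : ¬((i : ℕ) = 0 ∧ (j : ℕ) = 0) := fun h ↦ by omega
  exact (xor_iff_not_iff _ _).mp (hD.2.1 i j hij not_root)
    (iff_of_true ⟨i', hi', h_above⟩ h_left)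

theorem IsComplete.isLeaf_or_isInternal (hD : IsComplete D) (h : Dotted D i j) :
    IsLeaf D i j ∨ IsInternal D i j := by
  have := hD h
  unfold IsLeaf IsInternal
  tauto

theorem IsLeaf.col_eq (hj : IsLeaf D i j) (hk : IsLeaf D i k) : j = k :=
  le_antisymm (not_lt.mp fun hkj ↦ hk.2.2 ⟨j, hkj, hj.1⟩)
    (not_lt.mp fun hjk ↦ hj.2.2 ⟨k, hjk, hk.1⟩)

theorem IsLeftChild.parentAbove (h : IsLeftChild D p c) (hp : Dotted D p.1 p.2) :
    ParentAbove D p c :=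
  ⟨h.1.symm, h.2.1, hp, h.1.symm ▸ h.2.2.2⟩

theorem Interacting.ne (h : Interacting D l₁ l₂) : l₁ ≠ l₂ := by
  rintro rfl
  rcases h with ⟨_, _, _, _, _, _, ⟨_, h⟩ | ⟨_, h⟩⟩ | ⟨_, _, _, _, _, _, ⟨_, h⟩ | ⟨_, h⟩⟩
  all_goals exact h.false

theorem interactingLeft_of_parents_row_eq (hl₁ : IsLeaf D l₁.1 l₁.2) (hl₂ : IsLeaf D l₂.1 l₂.2)
    (h₁ : ParentAbove D p₁ l₁) (h₂ : ParentAbove D p₂ l₂) (hrow : p₁.1 = p₂.1)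
    (hcol : p₁.2 ≠ p₂.2) : InteractingLeft D l₁ l₂ := by
  have leaf_rows_ne : l₁.1 ≠ l₂.1 := fun h ↦
    hcol (h₁.1.trans ((hl₁.col_eq (h ▸ hl₂)).trans h₂.1.symm))
  refine ⟨⟨hl₁, p₁, h₁⟩, ⟨hl₂, p₂, h₂⟩, p₁, p₂, h₁, h₂, ?_⟩
  rcases leaf_rows_ne.lt_or_gt with hlt | hgt
  · exact Or.inr ⟨hrow ▸ h₁.2.1, hlt⟩
  · exact Or.inl ⟨hrow ▸ h₂.2.1, hgt⟩

theorem IsComplete.flip (hD : IsComplete D) : IsComplete (flip D) :=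
  fun _ _ hij ↦ (hD hij).symm

theorem IsLeaf.flip (h : IsLeaf D i j) : IsLeaf (flip D) j i :=
  ⟨h.1, h.2.2, h.2.1⟩

theorem IsInternal.flip (h : IsInternal D i j) : IsInternal (flip D) j i :=
  ⟨h.1, h.2.2, h.2.1⟩

theorem HasMixedChildren.flip (h : HasMixedChildren D d) :
    HasMixedChildren (flip D) d.swap := by
  obtain ⟨c₁, c₂, hd, h₁, h₂, h⟩ := h
  exact ⟨c₂.swap, c₁.swap, hd.flip, h₂, h₁,
    h.symm.imp (fun h ↦ ⟨h.2.flip, h.1.flip⟩) fun h ↦ ⟨h.2.flip, h.1.flip⟩⟩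

theorem IsNonAmbiguous.parentLeft_of_flip (hD : IsNonAmbiguous D) (hl : Dotted D l.2 l.1)
    (h : ParentAbove (flip D) p l) : ParentLeft D p.swap l.swap :=
  have ⟨hcol, hlt, hp, hnearest⟩ := h
  have dot_left : HasDotLeft D l.2 l.1 := ⟨p.1, hlt, hcol ▸ hp⟩
  ⟨hcol, hlt, hp, hnearest, fun dot_above ↦ hD hl ⟨dot_above, dot_left⟩⟩

theorem IsNonAmbiguous.interactingRight_of_flip (hD : IsNonAmbiguous D)
    (h : InteractingLeft (flip D) l₁ l₂) : InteractingRight D l₁.swap l₂.swap := by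
  obtain ⟨⟨hl₁, -⟩, ⟨hl₂, -⟩, p₁, p₂, h₁, h₂, hlt⟩ := h
  have h₁ := hD.parentLeft_of_flip hl₁.1 h₁
  have h₂ := hD.parentLeft_of_flip hl₂.1 h₂
  exact ⟨⟨hl₁.flip, _, h₁⟩, ⟨hl₂.flip, _, h₂⟩, _, _, h₁, h₂, hlt⟩

theorem IsInternal.exists_isLeftChild (h : IsInternal D d.1 d.2) : ∃ c, IsLeftChild D d c := by
  obtain ⟨r, ⟨hlt, hr⟩, hmin⟩ := exists_minimal_of_wellFoundedLT _ h.2.1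
  exact ⟨(r, d.2), rfl, hlt, hr, fun k hdk hkr hk ↦ (hmin ⟨hdk, hk⟩ hkr.le).not_gt hkr⟩

theorem IsInternal.exists_isRightChild (h : IsInternal D d.1 d.2) : ∃ c, IsRightChild D d c :=
  have ⟨c, hc⟩ := h.flip.exists_isLeftChild (d := d.swap)
  ⟨c.swap, hc⟩

theorem IsComplete.exists_isRightChild_isLeaf (hD : IsComplete D) (h : IsInternal D i j) :
    ∃ k, j ≤ k ∧ IsInternal D i k ∧ ∃ c, IsRightChild D (i, k) c ∧ IsLeaf D c.1 c.2 := by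
  obtain ⟨k, hjk, hk⟩ := Finite.exists_le_maximal h
  obtain ⟨c, hc⟩ := hk.prop.exists_isRightChild (d := (i, k))
  have hrow : c.1 = i := hc.1
  have not_internal : ¬IsInternal D c.1 c.2 := fun hi ↦
    hk.not_prop_of_gt hc.2.1 (hrow ▸ hi)
  exact ⟨k, hjk, hk.prop, c, hc, (hD.isLeaf_or_isInternal hc.2.2.1).resolve_right not_internal⟩

theorem IsComplete.exists_interactingLeft_or_hasMixedChildren (hD : IsComplete D)
    (hd : Dotted D d.1 d.2) (h₁ : IsLeftChild D d c₁) (hl : IsLeaf D c₁.1 c₁.2)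
    (h₂ : IsRightChild D d c₂) (hi : IsInternal D c₂.1 c₂.2) :
    (∃ l₁ l₂, InteractingLeft D l₁ l₂) ∨ ∃ e, d < e ∧ HasMixedChildren D e := by
  obtain ⟨k, hk, he, r, hr, hr_leaf⟩ := hD.exists_isRightChild_isLeaf (h₂.1 ▸ hi)
  have hdk : d.2 < k := h₂.2.1.trans_le hk
  obtain ⟨s, hs⟩ := he.exists_isLeftChild (d := (d.1, k))
  rcases hD.isLeaf_or_isInternal hs.2.2.1 with hs_leaf | hs_internal
  · exact Or.inl ⟨c₁, s, interactingLeft_of_parents_row_eq hl hs_leaf (h₁.parentAbove hd)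
      (hs.parentAbove he.1) rfl hdk.ne⟩
  · exact Or.inr ⟨(d.1, k), Prod.mk_lt_mk_iff_right.mpr hdk, s, r, he, hs, hr,
      Or.inr ⟨hs_internal, hr_leaf⟩⟩

theorem HasMixedChildren.exists_interacting_or_hasMixedChildren (h : HasMixedChildren D d)
    (hc : IsComplete D) (hna : IsNonAmbiguous D) :
    (∃ l₁ l₂, Interacting D l₁ l₂) ∨ ∃ e, d < e ∧ HasMixedChildren D e := by
  obtain ⟨c₁, c₂, hd, h₁, h₂, ⟨h_leaf, h_internal⟩ | ⟨h_internal, h_leaf⟩⟩ := h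
  · exact (hc.exists_interactingLeft_or_hasMixedChildren hd.1 h₁ h_leaf h₂ h_internal).imp_left
      fun ⟨l₁, l₂, hl⟩ ↦ ⟨l₁, l₂, Or.inl hl⟩
  · refine (hc.flip.exists_interactingLeft_or_hasMixedChildren (d := d.swap) (c₁ := c₂.swap)
      (c₂ := c₁.swap) hd.1 h₂ h_leaf.flip h₁ h_internal.flip).imp ?_ ?_
    · exact fun ⟨l₁, l₂, hl⟩ ↦ ⟨l₁.swap, l₂.swap, Or.inr (hna.interactingRight_of_flip hl)⟩
    · exact fun ⟨e, hde, he⟩ ↦ ⟨e.swap, Prod.swap_lt_swap.mp hde, he.flip⟩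

theorem cnat_mixed_children_interacting_general (hc : IsComplete D) (hna : IsNonAmbiguous D)
    (h : HasMixedChildren D d) : ∃ l₁ l₂, l₁ ≠ l₂ ∧ Interacting D l₁ l₂ := by
  induction d using WellFoundedGT.induction with
  | ind d ih =>
    rcases h.exists_interacting_or_hasMixedChildren hc hna with ⟨l₁, l₂, hl⟩ | ⟨e, hde, he⟩
    · exact ⟨l₁, l₂, hl.ne, hl⟩
    · exact ih e hde he

/-- Let `T` be a CNAT which has an internal dot whose two
children are a leaf and an internal dot. Then `T` has at least two
interacting leaves. -/
theorem cnat_mixed_children_interacting (n : ℕ) (D : Grid n) (hD : IsCNAT D)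
    (h : ∃ d c₁ c₂ : Fin n × Fin n, IsInternal D d.1 d.2 ∧
        IsLeftChild D d c₁ ∧ IsRightChild D d c₂ ∧
        ((IsLeaf D c₁.1 c₁.2 ∧ IsInternal D c₂.1 c₂.2) ∨
         (IsInternal D c₁.1 c₁.2 ∧ IsLeaf D c₂.1 c₂.2))) :
    ∃ l₁ l₂ : Fin n × Fin n, l₁ ≠ l₂ ∧ Interacting D l₁ l₂ :=
  have ⟨_, hd⟩ := h
  cnat_mixed_children_interacting_general hD.isComplete hD.isNonAmbiguous hd

end CNATf
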